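/- Let a ∈ (0, 1/2) and let Π be the marginal DL density Π(x) = (1/(2^{(1+a)/2} Γ(a))) |x|^{(a−1)/2} K_{1−a}(√(2|x|)). For S ⊂ {1,…,n} and η ∈ ℝ^{|S|} with ‖η‖₂ ≤ m for m large, the product density satisfies −log Π_S(η) ≤ C { |S| log(1/a) + |S|^{3/4} m^{1/2} } for an absolute constant C > 0. -/

import Mathlib

open Real MeasureTheory Set Finset

/-- Modified Bessel function of the second kind, via the integral representation
`K_ν(x) = Γ(ν+1/2)(2x)^ν/√π ∫_0^∞ cos t/(t²+x²)^{ν+1/2} dt`. -/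
noncomputable def besselK (ν x : ℝ) : ℝ :=
  Real.Gamma (ν + 1/2) * (2*x) ^ ν / Real.sqrt π *
    ∫ t in Set.Ioi (0:ℝ), Real.cos t / (t^2 + x^2) ^ (ν + 1/2)

/-- Marginal Dirichlet–Laplace density with parameter `a`. -/
noncomputable def dlDensity (a θ : ℝ) : ℝ :=
  (1 / (2 ^ ((1+a)/2) * Real.Gamma a)) * |θ| ^ ((a-1)/2) *
    besselK (1-a) (Real.sqrt (2*|θ|))


lemma dl_cos_gauss (s : ℝ) (hs : 0 < s) :
    ∫ t in Set.Ioi (0:ℝ), Real.cos t * Real.exp (-s * t^2) =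
      Real.sqrt (π / s) / 2 * Real.exp (-1 / (4*s)) := by
  have h1 := fourierIntegral_gaussian (b := (s:ℂ)) (by simpa using hs) 1
  have hint : Integrable (fun x : ℝ => Complex.exp (Complex.I * 1 * x) * Complex.exp (-(s:ℂ) * x^2)) := by
    refine (integrable_cexp_neg_mul_sq (b := (s:ℂ)) (by simpa using hs)).bdd_mul (c := 1)
      (by fun_prop) ?_
    refine Filter.Eventually.of_forall fun x => ?_
    rw [mul_one, mul_comm, Complex.norm_exp_ofReal_mul_I]
  have h2 := congrArg Complex.re h1
  rw [← Complex.reCLM_apply, ← ContinuousLinearMap.integral_comp_comm _ hint] at h2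
  have h3 : ∀ x : ℝ, Complex.reCLM (Complex.exp (Complex.I * 1 * x) * Complex.exp (-(s:ℂ) * x^2)) =
      Real.cos |x| * Real.exp (-s * |x|^2) := by
    intro x
    rw [Real.cos_abs, sq_abs]
    have e1 : Complex.exp (-(s:ℂ) * x^2) = ((Real.exp (-s * x^2) : ℝ) : ℂ) := by push_cast; rfl
    rw [e1, Complex.reCLM_apply, Complex.re_mul_ofReal, mul_one, mul_comm Complex.I,
      Complex.exp_ofReal_mul_I_re]
  simp_rw [h3] at h2
  rw [integral_comp_abs (f := fun x => Real.cos x * Real.exp (-s * x^2))] at h2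
  have h4 : ((π:ℂ) / s) ^ (1/2 : ℂ) * Complex.exp (-1^2 / (4 * s)) =
      ((Real.sqrt (π / s) * Real.exp (-1 / (4*s)) : ℝ) : ℂ) := by
    rw [Real.sqrt_eq_rpow, Complex.ofReal_mul, Complex.ofReal_cpow (by positivity)]
    push_cast
    norm_num
  rw [h4, Complex.ofReal_re] at h2
  linarith

lemma dl_integrable (p z : ℝ) (hp : 1 < p) (hz : 0 < z) :
    Integrable (fun q : ℝ × ℝ => q.2 ^ (p-1) * Real.exp (-z^2 * q.2) * Real.exp (-q.2 * q.1^2))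
      ((volume.restrict (Set.Ioi (0:ℝ))).prod (volume.restrict (Set.Ioi (0:ℝ)))) := by
  rw [integrable_prod_iff' (by apply Measurable.aestronglyMeasurable; fun_prop)]
  constructor
  · filter_upwards [ae_restrict_mem measurableSet_Ioi] with s hs
    exact ((integrable_exp_neg_mul_sq hs).integrableOn).const_mul _
  · have hI : IntegrableOn (fun x : ℝ => (x ^ (p-3/2) * Real.exp (-z^2 * x ^ (1:ℝ))) * (Real.sqrt π / 2))
        (Set.Ioi 0) :=
      (integrableOn_rpow_mul_exp_neg_mul_rpow (by linarith) one_pos (by positivity)).mul_const _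
    refine hI.congr_fun (fun s hs => ?_) measurableSet_Ioi
    have hs' : 0 < s := hs
    simp only [Real.norm_eq_abs]
    have : ∀ x : ℝ, |s ^ (p-1) * Real.exp (-z^2 * s) * Real.exp (-s * x^2)| =
        s ^ (p-1) * Real.exp (-z^2 * s) * Real.exp (-s * x^2) := fun x =>
      abs_of_nonneg (by positivity)
    simp_rw [this]
    rw [integral_const_mul, integral_gaussian_Ioi, Real.rpow_one, Real.sqrt_div pi_pos.le,
      show p - 3/2 = (p-1) - 1/2 by ring, Real.rpow_sub hs', ← Real.sqrt_eq_rpow]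
    ring

lemma dl_gamma_integral (p z : ℝ) (hp : 1 < p) (hz : 0 < z) :
    IntegrableOn (fun s : ℝ => s ^ (p-1) * Real.exp (-z^2 * s) *
        (Real.sqrt (π / s) / 2 * Real.exp (-1 / (4*s)))) (Set.Ioi 0) ∧
    Real.Gamma p * ∫ t in Set.Ioi (0:ℝ), Real.cos t / (t^2 + z^2) ^ p =
      ∫ s in Set.Ioi (0:ℝ), s ^ (p-1) * Real.exp (-z^2 * s) *
        (Real.sqrt (π / s) / 2 * Real.exp (-1 / (4*s))) := by
  have hF : Integrable (Function.uncurry (fun t s : ℝ => Real.cos t *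
      (s ^ (p-1) * Real.exp (-z^2 * s) * Real.exp (-s * t^2))))
      ((volume.restrict (Set.Ioi (0:ℝ))).prod (volume.restrict (Set.Ioi (0:ℝ)))) := by
    refine (dl_integrable p z hp hz).bdd_mul (f := fun q : ℝ × ℝ => Real.cos q.1) (c := 1)
      (by apply Measurable.aestronglyMeasurable; fun_prop) ?_
    exact Filter.Eventually.of_forall fun q => Real.abs_cos_le_one _
  have hin : ∀ s ∈ Set.Ioi (0:ℝ), ∫ t in Set.Ioi (0:ℝ), Real.cos t *
      (s ^ (p-1) * Real.exp (-z^2 * s) * Real.exp (-s * t^2)) = s ^ (p-1) * Real.exp (-z^2 * s) *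
        (Real.sqrt (π / s) / 2 * Real.exp (-1 / (4*s))) := by
    intro s hs
    rw [← dl_cos_gauss s hs, ← integral_const_mul]
    congr 1; ext t; ring
  constructor
  · have := hF.integral_prod_right
    exact IntegrableOn.congr_fun this hin measurableSet_Ioi
  · rw [← setIntegral_congr_fun measurableSet_Ioi hin, ← integral_integral_swap hF,
      ← integral_const_mul]
    refine setIntegral_congr_fun measurableSet_Ioi fun t ht => ?_
    have hr : 0 < t^2 + z^2 := by positivity
    have := Real.integral_rpow_mul_exp_neg_mul_Ioi (a := p) (by linarith) hr
    rw [integral_const_mul]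
    have e : ∀ s : ℝ, s ^ (p-1) * Real.exp (-z^2 * s) * Real.exp (-s * t^2) =
        s ^ (p-1) * Real.exp (-((t^2+z^2) * s)) := by
      intro s
      rw [mul_assoc, ← Real.exp_add]; ring_nf
    simp_rw [e]
    rw [this, one_div, Real.inv_rpow hr.le]
    ring

lemma dl_integral_lower (a z : ℝ) (ha : 0 < a) (ha' : a < 1/2) (hz : 0 < z) :
    Real.sqrt π / 4 * Real.exp (-1 - 4*z) ≤
      Real.Gamma (1 - a + 1/2) *
        ∫ t in Set.Ioi (0:ℝ), Real.cos t / (t^2 + z^2) ^ (1 - a + 1/2) := by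
  obtain ⟨hint, heq⟩ := dl_gamma_integral (1 - a + 1/2) z (by linarith) hz
  rw [heq]
  have hz1 : 0 < 1 + z := by linarith
  have hsub : Set.Ioc (1/(1+z)) (2/(1+z)) ⊆ Set.Ioi (0:ℝ) := fun s hs =>
    lt_trans (by positivity) hs.1
  refine le_trans ?_ (setIntegral_mono_set hint ?_ hsub.eventuallyLE)
  swap
  · filter_upwards [ae_restrict_mem measurableSet_Ioi] with s hs
    have hs' : 0 < s := hs
    simp only [Pi.zero_apply]
    positivity
  have hb : ∀ s ∈ Set.Ioc (1/(1+z)) (2/(1+z)), Real.sqrt π / 4 * Real.exp (-1 - 3*z) ≤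
      s ^ (1 - a + 1/2-1) * Real.exp (-z^2 * s) *
        (Real.sqrt (π / s) / 2 * Real.exp (-1 / (4*s))) := by
    intro s hs
    have hs0 : 0 < s := hsub hs
    have h1 : 1 < s * (1+z) := by rw [← div_lt_iff₀ hz1]; exact hs.1
    have h2 : s * (1+z) ≤ 2 := by rw [← le_div_iff₀ hz1]; exact hs.2
    have hs2 : s ≤ 2 := by nlinarith
    have e : s ^ (1 - a + 1/2-1) * Real.exp (-z^2 * s) *
        (Real.sqrt (π / s) / 2 * Real.exp (-1 / (4*s))) =
        (Real.sqrt π / 2) * s ^ (-a) * Real.exp (-z^2 * s + -1 / (4*s)) := by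
      rw [Real.sqrt_div pi_pos.le, Real.exp_add, show 1 - a + 1/2 - 1 = -a + 1/2 by ring,
        Real.rpow_add hs0, ← Real.sqrt_eq_rpow]
      have := (Real.sqrt_pos.mpr hs0).ne'
      field_simp
    rw [e]
    have h3 : (1/2:ℝ) ≤ s ^ (-a) := by
      rw [Real.rpow_neg hs0.le, one_div]
      apply inv_anti₀ (by positivity)
      calc s ^ a ≤ 2 ^ a := by gcongr
        _ ≤ 2 ^ (1:ℝ) := Real.rpow_le_rpow_of_exponent_le (by norm_num) (by linarith)
        _ = 2 := by norm_num
    have h4 : Real.exp (-1 - 3*z) ≤ Real.exp (-z^2 * s + -1 / (4*s)) := by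
      apply Real.exp_le_exp.mpr
      have : 1 / (4*s) ≤ (1+z)/4 := by
        rw [div_le_iff₀ (by positivity)]; nlinarith
      have h5 : z^2 * s ≤ 2 * z := by nlinarith
      rw [neg_div]
      linarith
    calc Real.sqrt π / 4 * Real.exp (-1 - 3*z) = Real.sqrt π / 2 * (1/2) * Real.exp (-1 - 3*z) := by ring
      _ ≤ _ := by gcongr
  have hge := setIntegral_ge_of_const_le_real (μ := volume) measurableSet_Ioc (by simp) hb (hint.mono_set hsub)
  refine le_trans ?_ hge
  rw [Real.volume_real_Ioc_of_le (by gcongr; norm_num), mul_assoc]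
  gcongr ?_ * ?_
  rw [show -1 - 4*z = (-1-3*z) + -z by ring, Real.exp_add]
  gcongr
  rw [Real.exp_neg, ← sub_div, show (2:ℝ)-1 = 1 by norm_num, one_div]
  apply inv_anti₀ hz1
  linarith [Real.add_one_le_exp z]

lemma dl_Gamma_le (a : ℝ) (ha : 0 < a) (ha' : a < 1/2) : Real.Gamma a ≤ 1 / a := by
  have h := Real.convexOn_Gamma.2 (Set.mem_Ioi.mpr one_pos) (Set.mem_Ioi.mpr two_pos)
    (show 0 ≤ 1 - a by linarith) ha.le (by ring)
  simp only [smul_eq_mul, Real.Gamma_one, Real.Gamma_two] at h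
  rw [show (1 - a) * 1 + a * 2 = a + 1 by ring, Real.Gamma_add_one ha.ne'] at h
  rw [le_div_iff₀ ha]
  linarith

lemma dl_density_lower (a x : ℝ) (ha : 0 < a) (ha' : a < 1/2) (hx : x ≠ 0) :
    a / 4 * Real.exp (-1 - 4 * Real.sqrt (2*|x|)) ≤ dlDensity a x := by
  have hx' : 0 < |x| := abs_pos.mpr hx
  set z := Real.sqrt (2*|x|) with hz
  have hz0 : 0 < z := Real.sqrt_pos.mpr (by positivity)
  have hL := dl_integral_lower a z ha ha' hz0
  have hG : 0 < Real.Gamma a := Real.Gamma_pos_of_pos ha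
  set J := Real.Gamma (1 - a + 1/2) *
        ∫ t in Set.Ioi (0:ℝ), Real.cos t / (t^2 + z^2) ^ (1 - a + 1/2) with hJ
  have hxz : |x| = z^2 / 2 := by rw [hz, Real.sq_sqrt (by positivity)]; ring
  have hxp : |x| ^ ((a-1)/2) = 2 ^ ((1-a)/2) * z ^ (-(1-a)) := by
    rw [hxz, Real.div_rpow (by positivity) (by norm_num), ← Real.rpow_natCast z 2,
      ← Real.rpow_mul hz0.le, show (a-1)/2 = -((1-a)/2) by ring, Real.rpow_neg two_pos.le]
    rw [show ((2:ℕ):ℝ) * -((1-a)/2) = -(1-a) by push_cast; ring, div_inv_eq_mul, mul_comm]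
  have e : dlDensity a x = (2:ℝ) ^ (1 - 2*a) * (1 / Real.Gamma a) * (J / Real.sqrt π) := by
    unfold dlDensity besselK
    rw [← hz, hxp, Real.mul_rpow two_pos.le hz0.le, Real.rpow_neg hz0.le, hJ,
      show 1 - 2*a = (1-a)/2 + (1-a) - (1+a)/2 by ring, Real.rpow_sub two_pos (_ + _),
      Real.rpow_add two_pos]
    have : z ^ (1-a) ≠ 0 := by positivity
    have : (2:ℝ) ^ ((1+a)/2) ≠ 0 := by positivity
    field_simp
  have hsp : 0 < Real.sqrt π := Real.sqrt_pos.mpr pi_pos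
  rw [e]
  have h1 : (1:ℝ) ≤ 2 ^ (1-2*a) := Real.one_le_rpow (by norm_num) (by linarith)
  have h2 : a ≤ 1 / Real.Gamma a := by
    rw [le_div_iff₀ hG]
    have := dl_Gamma_le a ha ha'
    rw [le_div_iff₀ ha] at this
    linarith
  have h3 : 1/4 * Real.exp (-1 - 4*z) ≤ J / Real.sqrt π := by
    rw [le_div_iff₀ hsp]; linarith
  calc a / 4 * Real.exp (-1 - 4*z) = 1 * a * (1/4 * Real.exp (-1 - 4*z)) := by ring
    _ ≤ _ := by gcongr

lemma dl_neg_log (a x : ℝ) (ha : 0 < a) (ha' : a < 1/2) (hx : x ≠ 0) :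
    0 < dlDensity a x ∧
      -Real.log (dlDensity a x) ≤ 6 * (Real.log (1/a) + Real.sqrt |x|) := by
  have h := dl_density_lower a x ha ha' hx
  have hp : 0 < a / 4 * Real.exp (-1 - 4 * Real.sqrt (2*|x|)) := by positivity
  refine ⟨hp.trans_le h, ?_⟩
  have hl := Real.log_le_log hp h
  rw [Real.log_mul (by positivity) (by positivity), Real.log_exp, Real.log_div ha.ne' (by norm_num),
    Real.sqrt_mul (by norm_num), show (4:ℝ) = 2^2 by norm_num, Real.log_pow] at hl
  have h2 : Real.log 2 ≤ Real.log (1/a) := by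
    apply Real.log_le_log two_pos
    rw [le_div_iff₀ ha]; linarith
  rw [one_div, Real.log_inv] at h2 ⊢
  have h3 := Real.log_two_gt_d9
  have h4 : Real.sqrt 2 ≤ 3/2 := by
    rw [Real.sqrt_le_left (by norm_num)]; norm_num
  have h5 := Real.sqrt_nonneg |x|
  push_cast at hl
  nlinarith

lemma dl_sum_sqrt (s : ℕ) (η : Fin s → ℝ) (m : ℝ) (hm : 0 < m)
    (h : Real.sqrt (∑ j, (η j) ^ 2) ≤ m) :
    ∑ j, Real.sqrt |η j| ≤ (s : ℝ) ^ ((3:ℝ)/4) * m ^ ((1:ℝ)/2) := by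
  have h1 : (∑ j, |η j|)^2 ≤ s * m^2 := by
    have := sq_sum_le_card_mul_sum_sq (s := Finset.univ) (f := fun j => |η j|)
    simp only [sq_abs, Finset.card_univ, Fintype.card_fin] at this
    have h' := (Real.sqrt_le_left hm.le).mp h
    exact this.trans (by gcongr)
  have h2 : (∑ j, Real.sqrt |η j|)^2 ≤ s * ∑ j, |η j| := by
    have := sq_sum_le_card_mul_sum_sq (s := Finset.univ) (f := fun j => Real.sqrt |η j|)
    simpa only [Real.sq_sqrt (abs_nonneg _), Finset.card_univ, Fintype.card_fin] using this
  have h3 : (∑ j, Real.sqrt |η j|)^4 ≤ (s:ℝ)^3 * m^2 := by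
    calc (∑ j, Real.sqrt |η j|)^4 = ((∑ j, Real.sqrt |η j|)^2)^2 := by ring
      _ ≤ (s * ∑ j, |η j|)^2 := by gcongr
      _ = (s:ℝ)^2 * (∑ j, |η j|)^2 := by ring
      _ ≤ (s:ℝ)^2 * (s * m^2) := by gcongr
      _ = _ := by ring
  refine le_of_pow_le_pow_left₀ (n := 4) (by norm_num) (by positivity) (h3.trans (le_of_eq ?_))
  rw [mul_pow, ← Real.rpow_mul_natCast (by positivity), ← Real.rpow_mul_natCast hm.le]
  norm_num

/-- Lower bound on the joint DL density: for `a ∈ (0, 1/2)` and `η ∈ ℝ^{|S|}`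
with `‖η‖₂ ≤ m` (`m` large),
`−log Π_S(η) ≤ C { |S| log(1/a) + |S|^{3/4} m^{1/2} }` for an absolute `C > 0`. -/
theorem dl_joint_density_lower :
    ∃ C > 0, ∃ m₀ > 0, ∀ a : ℝ, 0 < a → a < 1/2 →
      ∀ m : ℝ, m₀ ≤ m →
        ∀ (s : ℕ) (η : Fin s → ℝ), Real.sqrt (∑ j, (η j) ^ 2) ≤ m →
          -Real.log (∏ j, dlDensity a (η j)) ≤
            C * (s * Real.log (1/a) + (s : ℝ) ^ ((3:ℝ)/4) * m ^ ((1:ℝ)/2)) := by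
  refine ⟨6, by norm_num, 1, one_pos, ?_⟩
  intro a ha ha' m hm s η hη
  have hm0 : 0 < m := by linarith
  have hlog : 0 ≤ Real.log (1/a) := Real.log_nonneg (by rw [le_div_iff₀ ha]; linarith)
  by_cases h0 : ∃ j, η j = 0
  · obtain ⟨j, hj⟩ := h0
    have hd : dlDensity a (η j) = 0 := by
      unfold dlDensity
      rw [hj, abs_zero, Real.zero_rpow (by intro h; linarith)]
      simp
    rw [Finset.prod_eq_zero (Finset.mem_univ j) hd, Real.log_zero, neg_zero]
    positivity
  · push Not at h0
    have hk := fun j => dl_neg_log a (η j) ha ha' (h0 j)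
    rw [Real.log_prod (fun j _ => (hk j).1.ne'), ← Finset.sum_neg_distrib]
    calc ∑ j, -Real.log (dlDensity a (η j))
        ≤ ∑ j, 6 * (Real.log (1/a) + Real.sqrt |η j|) := Finset.sum_le_sum fun j _ => (hk j).2
      _ = 6 * (s * Real.log (1/a) + ∑ j, Real.sqrt |η j|) := by
        rw [← Finset.mul_sum, Finset.sum_add_distrib]; simp
      _ ≤ _ := by gcongr; exact dl_sum_sqrt s η m hm0 hη
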